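/- arXiv:1709.04047 — 3 statements merged into one kernel-verified Lean document; each statement's English description precedes it below -/
import Mathlib

section
/- Let (Ω, F, P) be a probability space, δ a real number with 0 ≤ δ < 1, j ≥ 1 a natural number, and T ≥ 1 a natural number. Let (x_t)_{t≥1} and (w_t)_{t≥1} be random vectors in ℝ^n such that x_1 = 0 almost surely, ‖x_{t+1}‖ ≤ δ‖x_t‖ + ‖w_t‖ almost surely for every t ≥ 1, the random variables w_1, …, w_T are identically distributed, and exp(‖w_1‖^j) is integrable. Then E[(max_{1≤t≤T} ‖x_t‖)^j] ≤ (1−δ)^{−j} · log(T · E[exp(‖w_1‖^j)]). -/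
open MeasureTheory

/-!
Unrolling the recursion gives `max_t ‖x_t‖ ≤ (1 - δ)⁻¹ * max_t ‖w_t‖` pathwise, so only the expected
maximum of the variables `Y_t = ‖w_t‖ ^ p` has to be bounded. By Jensen's inequality for `exp`,
`exp (E[max_t Y_t]) ≤ E[exp (max_t Y_t)] = E[max_t exp Y_t] ≤ ∑_t E[exp Y_t]`.
-/

theorem apply_sup'_le_sup'_comp {ι α β : Type*} [LinearOrder α] [SemilatticeSup β]
    {s : Finset ι} (hs : s.Nonempty) (g : α → β) (f : ι → α) :
    g (s.sup' hs f) ≤ s.sup' hs (fun i => g (f i)) := by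
  obtain ⟨i, hi, hmax⟩ := Finset.exists_mem_eq_sup' hs f
  rw [hmax]
  exact Finset.le_sup' (fun i => g (f i)) hi

section Recursion

variable {K : Type*} [Field K] [LinearOrder K] [IsStrictOrderedRing K] {δ : K} {m T : ℕ}
  {u v : ℕ → K}

theorem le_inv_one_sub_mul_of_affine_recursion (hδ0 : 0 ≤ δ) (hδ1 : δ < 1) {V : K}
    (hm : u m ≤ (1 - δ)⁻¹ * V)
    (hrec : ∀ t ∈ Finset.Ico m T, u (t + 1) ≤ δ * u t + v t)
    (hv : ∀ t ∈ Finset.Ico m T, v t ≤ V) :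
    ∀ t ∈ Finset.Icc m T, u t ≤ (1 - δ)⁻¹ * V := by
  have fixed_point : δ * ((1 - δ)⁻¹ * V) + V = (1 - δ)⁻¹ * V := by
    have : 1 - δ ≠ 0 := (sub_pos.2 hδ1).ne'
    field_simp
    ring
  intro t ht
  rw [Finset.mem_Icc] at ht
  obtain ⟨hmt, htT⟩ := ht
  induction t, hmt using Nat.le_induction with
  | base => exact hm
  | succ t hmt ih =>
    have ht : t ∈ Finset.Ico m T := Finset.mem_Ico.2 ⟨hmt, htT⟩
    calc u (t + 1) ≤ δ * u t + v t := hrec t ht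
      _ ≤ δ * ((1 - δ)⁻¹ * V) + V := by
        gcongr
        · exact ih (Nat.le_of_succ_le htT)
        · exact hv t ht
      _ = (1 - δ)⁻¹ * V := fixed_point

theorem sup'_le_inv_one_sub_mul_sup'_of_affine_recursion (hδ0 : 0 ≤ δ) (hδ1 : δ < 1)
    (hne : (Finset.Icc m T).Nonempty) (hm : u m ≤ 0) (hv : 0 ≤ v m)
    (hrec : ∀ t ∈ Finset.Ico m T, u (t + 1) ≤ δ * u t + v t) :
    (Finset.Icc m T).sup' hne u ≤ (1 - δ)⁻¹ * (Finset.Icc m T).sup' hne v := by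
  have sup'_nonneg : 0 ≤ (Finset.Icc m T).sup' hne v :=
    Finset.le_sup'_of_le v (Finset.left_mem_Icc.2 (Finset.nonempty_Icc.1 hne)) hv
  have inv_one_sub_nonneg : 0 ≤ (1 - δ)⁻¹ := inv_nonneg.2 (sub_nonneg.2 hδ1.le)
  exact Finset.sup'_le hne u <| le_inv_one_sub_mul_of_affine_recursion hδ0 hδ1
    (hm.trans (mul_nonneg inv_one_sub_nonneg sup'_nonneg)) hrec
    fun t ht => Finset.le_sup' v (Finset.Ico_subset_Icc_self ht)

end Recursion

theorem sup'_rpow_le_inv_one_sub_rpow_mul_sup'_rpow_of_affine_recursion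
    {δ p : ℝ} {m T : ℕ} {u v : ℕ → ℝ} (hδ0 : 0 ≤ δ) (hδ1 : δ < 1) (hp : 0 ≤ p)
    (hne : (Finset.Icc m T).Nonempty) (hm : u m = 0) (hv : 0 ≤ v m)
    (hrec : ∀ t ∈ Finset.Ico m T, u (t + 1) ≤ δ * u t + v t) :
    (Finset.Icc m T).sup' hne u ^ p
      ≤ (1 - δ)⁻¹ ^ p * (Finset.Icc m T).sup' hne (fun t => v t ^ p) := by
  have m_mem : m ∈ Finset.Icc m T := Finset.left_mem_Icc.2 (Finset.nonempty_Icc.1 hne)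
  have inv_one_sub_nonneg : 0 ≤ (1 - δ)⁻¹ := inv_nonneg.2 (sub_nonneg.2 hδ1.le)
  calc (Finset.Icc m T).sup' hne u ^ p
      ≤ ((1 - δ)⁻¹ * (Finset.Icc m T).sup' hne v) ^ p :=
        Real.rpow_le_rpow (Finset.le_sup'_of_le u m_mem hm.ge)
          (sup'_le_inv_one_sub_mul_sup'_of_affine_recursion hδ0 hδ1 hne hm.le hv hrec) hp
    _ = (1 - δ)⁻¹ ^ p * (Finset.Icc m T).sup' hne v ^ p :=
        Real.mul_rpow inv_one_sub_nonneg (Finset.le_sup'_of_le v m_mem hv)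
    _ ≤ (1 - δ)⁻¹ ^ p * (Finset.Icc m T).sup' hne (fun t => v t ^ p) :=
        mul_le_mul_of_nonneg_left (apply_sup'_le_sup'_comp hne (· ^ p) v)
          (Real.rpow_nonneg inv_one_sub_nonneg p)

section Integral

variable {Ω : Type*} [MeasurableSpace Ω] {μ : Measure Ω}

theorem integrable_finset_sup' {ι β : Type*} [NormedAddCommGroup β] [Lattice β] [HasSolidNorm β]
    [IsOrderedAddMonoid β] {s : Finset ι} (hs : s.Nonempty) {f : ι → Ω → β}
    (hf : ∀ i ∈ s, Integrable (f i) μ) :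
    Integrable (fun ω => s.sup' hs (fun i => f i ω)) μ := by
  simp only [← Finset.sup'_apply]
  exact Finset.sup'_induction hs f (p := (Integrable · μ)) (fun _ h₁ _ h₂ => h₁.sup h₂) hf

theorem integrable_of_nonneg_of_integrable_exp {f : Ω → ℝ} (hf : 0 ≤ᵐ[μ] f)
    (hexp : Integrable (fun ω => Real.exp (f ω)) μ) : Integrable f μ := by
  have hf_meas : AEMeasurable f μ := Real.aemeasurable_of_aemeasurable_exp hexp.aemeasurable
  refine hexp.mono' hf_meas.aestronglyMeasurable ?_
  filter_upwards [hf] with ω hω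
  calc ‖f ω‖ = f ω := Real.norm_of_nonneg hω
    _ ≤ f ω + 1 := le_add_of_nonneg_right zero_le_one
    _ ≤ Real.exp (f ω) := Real.add_one_le_exp (f ω)

variable [IsProbabilityMeasure μ]

theorem integral_le_log_integral_exp {f : Ω → ℝ} (hf : Integrable f μ)
    (hexp : Integrable (fun ω => Real.exp (f ω)) μ) :
    ∫ ω, f ω ∂μ ≤ Real.log (∫ ω, Real.exp (f ω) ∂μ) := by
  rw [Real.le_log_iff_exp_le (integral_exp_pos hexp)]
  exact convexOn_exp.map_integral_le Real.continuous_exp.continuousOn isClosed_univ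
    (ae_of_all μ fun _ => Set.mem_univ _) hf hexp

theorem integral_sup'_le_log_sum_integral_exp {ι : Type*} {s : Finset ι} (hs : s.Nonempty)
    {Y : ι → Ω → ℝ} (hY : ∀ i ∈ s, Integrable (Y i) μ)
    (hexp : ∀ i ∈ s, Integrable (fun ω => Real.exp (Y i ω)) μ) :
    ∫ ω, s.sup' hs (fun i => Y i ω) ∂μ
      ≤ Real.log (∑ i ∈ s, ∫ ω, Real.exp (Y i ω) ∂μ) := by
  have exp_sup' (ω : Ω) : Real.exp (s.sup' hs fun i => Y i ω)
      = s.sup' hs fun i => Real.exp (Y i ω) :=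
    Finset.apply_sup'_eq_sup'_comp hs Real.exp fun _ _ => Real.exp_monotone.map_sup _ _
  have integrable_exp_sup' : Integrable (fun ω => Real.exp (s.sup' hs fun i => Y i ω)) μ := by
    simpa only [exp_sup'] using integrable_finset_sup' hs hexp
  refine (integral_le_log_integral_exp (integrable_finset_sup' hs hY) integrable_exp_sup').trans
    (Real.log_le_log (integral_exp_pos integrable_exp_sup') ?_)
  rw [← integral_finsetSum s hexp]
  refine integral_mono integrable_exp_sup' (integrable_finsetSum s hexp) fun ω => ?_
  rw [exp_sup']
  exact Finset.sup'_le hs _ fun i hi =>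
    Finset.single_le_sum (f := fun i => Real.exp (Y i ω)) (fun i _ => (Real.exp_pos _).le) hi

end Integral

theorem stmt_6_general {Ω E F : Type*} [MeasurableSpace Ω] [SeminormedAddGroup E]
    [SeminormedAddGroup F] (P : Measure Ω) [IsProbabilityMeasure P]
    {δ : ℝ} (hδ0 : 0 ≤ δ) (hδ1 : δ < 1) {p : ℝ} (hp : 0 ≤ p) {T : ℕ} (hT : 1 ≤ T)
    {x : ℕ → Ω → E} {w : ℕ → Ω → F} (hx1 : ∀ᵐ ω ∂P, x 1 ω = 0)
    (hrec : ∀ t ∈ Finset.Ico 1 T, ∀ᵐ ω ∂P, ‖x (t + 1) ω‖ ≤ δ * ‖x t ω‖ + ‖w t ω‖)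
    (hint : ∀ t ∈ Finset.Icc 1 T, Integrable (fun ω => Real.exp (‖w t ω‖ ^ p)) P) :
    ∫ ω, ((Finset.Icc 1 T).sup' (Finset.nonempty_Icc.mpr hT) (fun t => ‖x t ω‖)) ^ p ∂P
      ≤ (1 - δ)⁻¹ ^ p * Real.log (∑ t ∈ Finset.Icc 1 T, ∫ ω, Real.exp (‖w t ω‖ ^ p) ∂P) := by
  have hne : (Finset.Icc 1 T).Nonempty := Finset.nonempty_Icc.2 hT
  have inv_one_sub_nonneg : 0 ≤ (1 - δ)⁻¹ := inv_nonneg.2 (sub_nonneg.2 hδ1.le)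
  have sup'_norm_nonneg (ω : Ω) : 0 ≤ (Finset.Icc 1 T).sup' hne (fun t => ‖x t ω‖) :=
    Finset.le_sup'_of_le _ (Finset.left_mem_Icc.2 hT) (norm_nonneg (x 1 ω))
  have integrable_norm_rpow : ∀ t ∈ Finset.Icc 1 T, Integrable (fun ω => ‖w t ω‖ ^ p) P :=
    fun t ht => integrable_of_nonneg_of_integrable_exp
      (ae_of_all P fun ω => Real.rpow_nonneg (norm_nonneg _) p) (hint t ht)
  have pathwise : ∀ᵐ ω ∂P, ((Finset.Icc 1 T).sup' hne fun t => ‖x t ω‖) ^ p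
      ≤ (1 - δ)⁻¹ ^ p * (Finset.Icc 1 T).sup' hne fun t => ‖w t ω‖ ^ p := by
    filter_upwards [hx1, (Filter.eventually_all_finset _).2 hrec] with ω hx1 hrec
    exact sup'_rpow_le_inv_one_sub_rpow_mul_sup'_rpow_of_affine_recursion hδ0 hδ1 hp hne
      (hx1 ▸ norm_zero) (norm_nonneg _) hrec
  calc ∫ ω, ((Finset.Icc 1 T).sup' hne fun t => ‖x t ω‖) ^ p ∂P
      ≤ ∫ ω, (1 - δ)⁻¹ ^ p * (Finset.Icc 1 T).sup' hne (fun t => ‖w t ω‖ ^ p) ∂P :=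
        integral_mono_of_nonneg (ae_of_all P fun ω => Real.rpow_nonneg (sup'_norm_nonneg ω) p)
          ((integrable_finset_sup' hne integrable_norm_rpow).const_mul _) pathwise
    _ = (1 - δ)⁻¹ ^ p * ∫ ω, (Finset.Icc 1 T).sup' hne (fun t => ‖w t ω‖ ^ p) ∂P :=
        integral_const_mul _ _
    _ ≤ (1 - δ)⁻¹ ^ p * Real.log (∑ t ∈ Finset.Icc 1 T, ∫ ω, Real.exp (‖w t ω‖ ^ p) ∂P) :=
        mul_le_mul_of_nonneg_left
          (integral_sup'_le_log_sum_integral_exp hne integrable_norm_rpow hint)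
          (Real.rpow_nonneg inv_one_sub_nonneg p)

theorem stmt_6 {Ω : Type*} [MeasurableSpace Ω] (P : Measure Ω) [IsProbabilityMeasure P]
    (δ : ℝ) (hδ0 : 0 ≤ δ) (hδ1 : δ < 1) (j : ℕ) (hj : 1 ≤ j) (T : ℕ) (hT : 1 ≤ T)
    (n : ℕ) (x w : ℕ → Ω → EuclideanSpace ℝ (Fin n))
    (hxmeas : ∀ t, Measurable (x t)) (hwmeas : ∀ t, Measurable (w t))
    (hx1 : ∀ᵐ ω ∂P, x 1 ω = 0)
    (hrec : ∀ t, 1 ≤ t → ∀ᵐ ω ∂P, ‖x (t + 1) ω‖ ≤ δ * ‖x t ω‖ + ‖w t ω‖)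
    (hid : ∀ t ∈ Finset.Icc 1 T, P.map (w t) = P.map (w 1))
    (hint : Integrable (fun ω => Real.exp (‖w 1 ω‖ ^ j)) P) :
    ∫ ω, ((Finset.Icc 1 T).sup' (Finset.nonempty_Icc.mpr hT) (fun t => ‖x t ω‖)) ^ j ∂P
      ≤ (1 - δ)⁻¹ ^ j * Real.log (T * ∫ ω, Real.exp (‖w 1 ω‖ ^ j) ∂P) := by
  have hdist : ∀ t ∈ Finset.Icc 1 T, ProbabilityTheory.IdentDistrib
      (fun ω => Real.exp (‖w t ω‖ ^ j)) (fun ω => Real.exp (‖w 1 ω‖ ^ j)) P P := fun t ht =>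
    .comp (u := fun v => Real.exp (‖v‖ ^ j))
      ⟨(hwmeas t).aemeasurable, (hwmeas 1).aemeasurable, hid t ht⟩ (by fun_prop)
  simpa only [Real.rpow_natCast, Finset.sum_congr rfl fun t ht => (hdist t ht).integral_eq,
      Finset.sum_const, Nat.card_Icc, Nat.add_sub_cancel, nsmul_eq_mul] using
    stmt_6_general P hδ0 hδ1 j.cast_nonneg hT hx1 (fun t ht => hrec t (Finset.mem_Ico.1 ht).1)
      fun t ht => by simpa only [Real.rpow_natCast] using (hdist t ht).integrable_iff.2 hint
end

section
/- Let K ≥ 1 and M ≥ 1 be natural numbers, let T_0 = 1 and let T_1, …, T_K be positive integers with Σ_{k=1}^K T_k = T. Suppose there are indices 1 = n_1 < n_2 < … < n_M ≤ K (with the convention n_{M+1} = K + 1) partitioning {1, …, K} into M consecutive blocks {n_i, …, n_{i+1} − 1}, such that T_k = T_{k−1} + 1 for every k that is not the last index of its block (i.e., for every k with n_i ≤ k ≤ n_{i+1} − 2 for some i). Then K ≤ √(2·M·T). -/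
/-!
Inside a block of `L` episodes every length but the last exceeds the previous one by `1`, starting
from a predecessor of length at least `1`. The block therefore lasts at least
`2 + 3 + ⋯ + L + 1 = L (L + 1) / 2`, so that `L ^ 2` is at most twice its duration. Adding up over
the `M` blocks, whose sizes add up to `K`, the Cauchy–Schwarz inequality gives
`K ^ 2 ≤ M * ∑ L ^ 2 ≤ 2 * M * T`.
-/

open Finset

section OrderedRing

variable {R : Type*} [CommRing R] [PartialOrder R] [IsOrderedRing R] {f : ℕ → R} {a : ℕ}

theorem add_natCast_le_of_add_one_le_succ {m : ℕ}
    (hf : ∀ k, a ≤ k → k < a + m → f k + 1 ≤ f (k + 1)) : f a + m ≤ f (a + m) := by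
  induction m with
  | zero => simp
  | succ m ih =>
    have hm : f a + m ≤ f (a + m) := ih fun k hak hk => hf k hak (by lia)
    have hlast : f (a + m) + 1 ≤ f (a + m + 1) := hf (a + m) (by lia) (by lia)
    rw [← add_assoc]
    push_cast
    linear_combination hm + hlast

theorem mul_two_mul_add_le_two_mul_sum_Ioc_of_add_one_le_succ {m : ℕ}
    (hf : ∀ k, a ≤ k → k < a + m → f k + 1 ≤ f (k + 1)) :
    m * (2 * f a + m + 1) ≤ 2 * ∑ k ∈ Ioc a (a + m), f k := by
  induction m with
  | zero => simp
  | succ m ih =>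
    have hsum : m * (2 * f a + m + 1) ≤ 2 * ∑ k ∈ Ioc a (a + m), f k :=
      ih fun k hak hk => hf k hak (by lia)
    have hlast : f a + (m + 1 : ℕ) ≤ f (a + (m + 1)) := add_natCast_le_of_add_one_le_succ hf
    rw [← add_assoc] at hlast ⊢
    rw [sum_Ioc_succ_top (by lia)]
    push_cast at hlast ⊢
    linear_combination hsum + hlast + hlast

theorem sq_sub_le_two_mul_sum_Ioc_of_add_one_le_succ {b : ℕ} (hab : a ≤ b) (ha : 1 ≤ f a)
    (hb : 1 ≤ f b) (hf : ∀ k, a ≤ k → k + 1 < b → f k + 1 ≤ f (k + 1)) :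
    ((b : R) - a) ^ 2 ≤ 2 * ∑ k ∈ Ioc a b, f k := by
  obtain rfl | hlt := hab.eq_or_lt
  · simp
  obtain ⟨m, rfl⟩ : ∃ m, b = a + m + 1 := Nat.exists_eq_add_of_lt hlt
  have hinit : m * (2 * f a + m + 1) ≤ 2 * ∑ k ∈ Ioc a (a + m), f k :=
    mul_two_mul_add_le_two_mul_sum_Ioc_of_add_one_le_succ fun k hak hk => hf k hak (by lia)
  have hm : (0 : R) ≤ m := m.cast_nonneg
  have hma : (m : R) * 1 ≤ m * f a := mul_le_mul_of_nonneg_left ha hm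
  rw [sum_Ioc_succ_top (by lia)]
  push_cast
  linear_combination hinit + hma + hma + hb + hb + hm

end OrderedRing

theorem sum_range_sum_Ioc_of_monotoneOn {A : Type*} [AddCommMonoid A] (f : ℕ → A) {c : ℕ → ℕ}
    {m : ℕ} (hc : MonotoneOn c (Set.Iic m)) :
    ∑ i ∈ range m, ∑ k ∈ Ioc (c i) (c (i + 1)), f k = ∑ k ∈ Ioc (c 0) (c m), f k := by
  induction m with
  | zero => simp
  | succ m ih =>
    rw [sum_range_succ, ih (hc.mono (Set.Iic_subset_Iic.2 m.le_succ)),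
      sum_Ioc_consecutive f (hc (by simp) (by simp) m.zero_le) (hc (by simp) (by simp) m.le_succ)]

theorem sq_sub_le_two_mul_mul_sum_Ioc_of_blocks {R : Type*} [CommRing R] [LinearOrder R]
    [IsStrictOrderedRing R] {f : ℕ → R} {c : ℕ → ℕ} {m : ℕ} (hc : MonotoneOn c (Set.Iic m))
    (hone : ∀ i ≤ m, 1 ≤ f (c i))
    (hf : ∀ i < m, ∀ k, c i ≤ k → k + 1 < c (i + 1) → f k + 1 ≤ f (k + 1)) :
    ((c m : R) - c 0) ^ 2 ≤ 2 * m * ∑ k ∈ Ioc (c 0) (c m), f k := by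
  have hblock : ∀ i ∈ range m,
      ((c (i + 1) : R) - c i) ^ 2 ≤ 2 * ∑ k ∈ Ioc (c i) (c (i + 1)), f k := fun i hi => by
    have him : i < m := mem_range.1 hi
    exact sq_sub_le_two_mul_sum_Ioc_of_add_one_le_succ (hc him.le him i.le_succ)
      (hone i him.le) (hone (i + 1) him) (hf i him)
  calc ((c m : R) - c 0) ^ 2
      = (∑ i ∈ range m, ((c (i + 1) : R) - c i)) ^ 2 := by
        rw [sum_range_sub fun i => (c i : R)]
    _ ≤ m * ∑ i ∈ range m, ((c (i + 1) : R) - c i) ^ 2 := by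
        simpa only [card_range] using sq_sum_le_card_mul_sum_sq (s := range m)
    _ ≤ m * ∑ i ∈ range m, 2 * ∑ k ∈ Ioc (c i) (c (i + 1)), f k := by
        gcongr with i hi
        exact hblock i hi
    _ = 2 * m * ∑ k ∈ Ioc (c 0) (c m), f k := by
        rw [← mul_sum, sum_range_sum_Ioc_of_monotoneOn f hc]
        ring

theorem stmt_9_general {K M : ℕ} {T : ℕ → ℝ} (hT : ∀ k ≤ K, 1 ≤ T k) {n : ℕ → ℕ} (hn1 : n 1 = 1)
    (hmono : ∀ i, 1 ≤ i → i ≤ M → n i ≤ n (i + 1)) (hnM1 : n (M + 1) = K + 1)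
    (hstep : ∀ i, 1 ≤ i → i ≤ M → ∀ k, n i ≤ k → k + 2 ≤ n (i + 1) → T (k - 1) + 1 ≤ T k) :
    (K : ℝ) ≤ √(2 * M * ∑ k ∈ Icc 1 K, T k) := by
  -- Block `i + 1` is `Ioc (c i) (c (i + 1))`: `c i` is the last episode before it.
  let c : ℕ → ℕ := fun i => n (i + 1) - 1
  have hc0 : c 0 = 0 := by simp [c, hn1]
  have hcM : c M = K := by simp [c, hnM1]
  have hc : MonotoneOn c (Set.Iic M) := monotoneOn_of_le_add_one Set.ordConnected_Iic
    fun i _ _ hi => Nat.sub_le_sub_right (hmono (i + 1) i.succ_pos hi) 1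
  have hone : ∀ i ≤ M, 1 ≤ T (c i) := fun i hi =>
    hT _ ((hc hi (Set.mem_Iic.2 le_rfl) hi).trans_eq hcM)
  have hgrow : ∀ i < M, ∀ k, c i ≤ k → k + 1 < c (i + 1) → T k + 1 ≤ T (k + 1) :=
    fun i hi k hik hki => hstep (i + 1) i.succ_pos hi (k + 1) (by grind) (by grind)
  have hsq := sq_sub_le_two_mul_mul_sum_Ioc_of_blocks hc hone hgrow
  rw [hc0, hcM, Nat.cast_zero, sub_zero, ← Icc_add_one_left_eq_Ioc, zero_add] at hsq
  exact Real.le_sqrt_of_sq_le hsq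

theorem stmt_9 (K M : ℕ) (hK : 1 ≤ K) (hM : 1 ≤ M)
    (T : ℕ → ℕ) (hT0 : T 0 = 1) (hTpos : ∀ k, 1 ≤ k → k ≤ K → 1 ≤ T k)
    (Ttot : ℕ) (hsum : ∑ k ∈ Finset.Icc 1 K, T k = Ttot)
    (n : ℕ → ℕ) (hn1 : n 1 = 1) (hmono : ∀ i, 1 ≤ i → i ≤ M → n i < n (i + 1))
    (hnM : n M ≤ K) (hnM1 : n (M + 1) = K + 1)
    (hstep : ∀ i, 1 ≤ i → i ≤ M → ∀ k, n i ≤ k → k + 2 ≤ n (i + 1) → T k = T (k - 1) + 1) :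
    (K : ℝ) ≤ Real.sqrt (2 * M * Ttot) := by
  have hT : ∀ k ≤ K, 1 ≤ T k := fun k hk => by
    obtain rfl | hpos := k.eq_zero_or_pos
    · exact hT0.ge
    · exact hTpos k hpos hk
  rw [← hsum, Nat.cast_sum]
  exact stmt_9_general (T := fun k => T k) (mod_cast hT) hn1 (fun i hi hiM => (hmono i hi hiM).le)
    hnM1 fun i hi hiM k hik hki => mod_cast (hstep i hi hiM k hik hki).ge
end

section
/- Let Ω, 𝒵, Θ, 𝒳 be standard Borel spaces, with (Ω, F, P) a probability space. Let Z : Ω → 𝒵 and θ, θ̃ : Ω → Θ be measurable, and suppose the conditional distributions of θ given Z and of θ̃ given Z coincide, i.e., the Markov kernels condDistrib(θ | Z) and condDistrib(θ̃ | Z) agree for (P ∘ Z⁻¹)-almost every z ∈ 𝒵. Let g : 𝒵 → 𝒳 be measurable, set X = g ∘ Z, and let f : Θ × 𝒳 → ℝ be bounded and measurable. Then E[f(θ̃, X)] = E[f(θ, X)]. -/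
open MeasureTheory ProbabilityTheory

theorem identDistrib_prodMk_of_condDistrib_ae_eq {α α' β Ω : Type*}
    [MeasurableSpace α] [MeasurableSpace α'] [MeasurableSpace β]
    [MeasurableSpace Ω] [StandardBorelSpace Ω] [Nonempty Ω]
    {μ : Measure α} [IsFiniteMeasure μ] {ν : Measure α'} [IsFiniteMeasure ν]
    {X : α → β} {X' : α' → β} {Y : α → Ω} {Y' : α' → Ω}
    (hX : IdentDistrib X X' μ ν) (hY : AEMeasurable Y μ) (hY' : AEMeasurable Y' ν)
    (hcond : condDistrib Y X μ =ᵐ[μ.map X] condDistrib Y' X' ν) :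
    IdentDistrib (fun a ↦ (X a, Y a)) (fun a ↦ (X' a, Y' a)) μ ν where
  aemeasurable_fst := hX.aemeasurable_fst.prodMk hY
  aemeasurable_snd := hX.aemeasurable_snd.prodMk hY'
  map_eq := calc
    μ.map (fun a ↦ (X a, Y a)) = μ.map X ⊗ₘ condDistrib Y X μ :=
      (compProd_map_condDistrib hY).symm
    _ = μ.map X ⊗ₘ condDistrib Y' X' ν := Measure.compProd_congr hcond
    _ = ν.map X' ⊗ₘ condDistrib Y' X' ν := by rw [hX.map_eq]
    _ = ν.map (fun a ↦ (X' a, Y' a)) := compProd_map_condDistrib hY'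

theorem stmt_12_general {Ω 𝒵 Θ 𝒳 : Type*}
    [MeasurableSpace Ω] [MeasurableSpace 𝒵] [MeasurableSpace 𝒳]
    [MeasurableSpace Θ] [StandardBorelSpace Θ] [Nonempty Θ]
    {P : Measure Ω} [IsFiniteMeasure P] {Z : Ω → 𝒵} {θ θt : Ω → Θ}
    (hZ : AEMeasurable Z P) (hθ : AEMeasurable θ P) (hθt : AEMeasurable θt P)
    (hcond : condDistrib θ Z P =ᵐ[P.map Z] condDistrib θt Z P)
    {g : 𝒵 → 𝒳} (hg : Measurable g) :
    IdentDistrib (fun ω ↦ (θt ω, g (Z ω))) (fun ω ↦ (θ ω, g (Z ω))) P P := by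
  have joint_law : IdentDistrib (fun ω ↦ (Z ω, θt ω)) (fun ω ↦ (Z ω, θ ω)) P P :=
    identDistrib_prodMk_of_condDistrib_ae_eq (.refl hZ) hθt hθ hcond.symm
  exact joint_law.comp (measurable_snd.prodMk (hg.comp measurable_fst))

theorem stmt_12 {Ω 𝒵 Θ 𝒳 : Type*}
    [MeasurableSpace Ω] [StandardBorelSpace Ω]
    [MeasurableSpace 𝒵] [StandardBorelSpace 𝒵] [Nonempty 𝒵]
    [MeasurableSpace Θ] [StandardBorelSpace Θ] [Nonempty Θ]
    [MeasurableSpace 𝒳] [StandardBorelSpace 𝒳] [Nonempty 𝒳]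
    (P : Measure Ω) [IsProbabilityMeasure P]
    (Z : Ω → 𝒵) (θ θt : Ω → Θ)
    (hZ : Measurable Z) (hθ : Measurable θ) (hθt : Measurable θt)
    (hcond : ∀ᵐ z ∂(P.map Z), condDistrib θ Z P z = condDistrib θt Z P z)
    (g : 𝒵 → 𝒳) (hg : Measurable g)
    (f : Θ × 𝒳 → ℝ) (hf : Measurable f) (C : ℝ) (hC : ∀ p, |f p| ≤ C) :
    ∫ ω, f (θt ω, g (Z ω)) ∂P = ∫ ω, f (θ ω, g (Z ω)) ∂P :=
  ((stmt_12_general hZ.aemeasurable hθ.aemeasurable hθt.aemeasurable hcond hg).comp hf).integral_eq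
end
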